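/- On the Robinson–Trautman spacetime with constants μ₁, μ₂ satisfying the condition that μ₂F₁₃ + μ₁F₁₁ = 0 identically (with F₁₁, F₁₃ as defined below) and F₁ - 2a + 4br ≠ 0, the vector field ξ = μ₁ ∂/∂x + μ₂ ∂/∂y is a Ricci collineation, i.e. L_ξ S = 0. -/

import Mathlib

open scoped BigOperators

noncomputable section

/-- Points of the coordinate chart `(t,r,x,y)`. -/
abbrev RTPt := Fin 4 → ℝ

/-- Partial derivative in coordinate direction `i`. -/
def RTpd (i : Fin 4) (F : RTPt → ℝ) (p : RTPt) : ℝ :=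
  deriv (fun s => F (Function.update p i s)) (p i)

/-- partial derivative of `f(x,y)` in `x`. -/
def pX (f : ℝ → ℝ → ℝ) (x y : ℝ) : ℝ := deriv (fun s => f s y) x

/-- partial derivative of `f(x,y)` in `y`. -/
def pY (f : ℝ → ℝ → ℝ) (x y : ℝ) : ℝ := deriv (fun s => f x s) y

/-- The Robinson–Trautman metric components. -/
def RTg (a b d : ℝ) (f : ℝ → ℝ → ℝ) (i j : Fin 4) (p : RTPt) : ℝ :=
  if i = 0 ∧ j = 0 then -2 * (a - 2 * b * p 1 - d / p 1)
  else if (i = 0 ∧ j = 1) ∨ (i = 1 ∧ j = 0) then 1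
  else if (i = 2 ∧ j = 2) ∨ (i = 3 ∧ j = 3) then -(p 1)^2 / (f (p 2) (p 3))^2
  else 0

/-- The inverse Robinson–Trautman metric components. -/
def RTgInv (a b d : ℝ) (f : ℝ → ℝ → ℝ) (i j : Fin 4) (p : RTPt) : ℝ :=
  if i = 1 ∧ j = 1 then 2 * (a - 2 * b * p 1 - d / p 1)
  else if (i = 0 ∧ j = 1) ∨ (i = 1 ∧ j = 0) then 1
  else if (i = 2 ∧ j = 2) ∨ (i = 3 ∧ j = 3) then -(f (p 2) (p 3))^2 / (p 1)^2
  else 0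

/-- Christoffel symbols `Γ^k_{ij}` of the Levi-Civita connection of the RT metric. -/
def RTGamma (a b d : ℝ) (f : ℝ → ℝ → ℝ) (k i j : Fin 4) (p : RTPt) : ℝ :=
  (1/2) * ∑ l : Fin 4, RTgInv a b d f k l p *
    (RTpd i (RTg a b d f l j) p + RTpd j (RTg a b d f l i) p - RTpd l (RTg a b d f i j) p)

/-- `(0,4)` Riemann curvature tensor
`R_{pqrs} = g_{pα}(∂_s Γ^α_{qr} - ∂_r Γ^α_{qs} + Γ^β_{qr}Γ^α_{βs} - Γ^β_{qs}Γ^α_{βr})`. -/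
def RTRiem (a b d : ℝ) (f : ℝ → ℝ → ℝ) (i j k l : Fin 4) (p : RTPt) : ℝ :=
  ∑ α : Fin 4, RTg a b d f i α p *
    (RTpd l (RTGamma a b d f α j k) p - RTpd k (RTGamma a b d f α j l) p
      + ∑ β : Fin 4, (RTGamma a b d f β j k p * RTGamma a b d f α β l p
          - RTGamma a b d f β j l p * RTGamma a b d f α β k p))

/-- Ricci tensor `S_{ij} = R^k_{ikj}` of the RT metric. -/
def RTRic (a b d : ℝ) (f : ℝ → ℝ → ℝ) (i j : Fin 4) (p : RTPt) : ℝ :=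
  ∑ k : Fin 4, ∑ l : Fin 4, RTgInv a b d f k l p * RTRiem a b d f l i k j p

/-- Scalar curvature of the RT metric. -/
def RTScal (a b d : ℝ) (f : ℝ → ℝ → ℝ) (p : RTPt) : ℝ :=
  ∑ i : Fin 4, ∑ j : Fin 4, RTgInv a b d f i j p * RTRic a b d f i j p

/-- Lie derivative of a `(0,2)` tensor field along a vector field `X`. -/
def RTlie2 (X : RTPt → Fin 4 → ℝ) (T : Fin 4 → Fin 4 → RTPt → ℝ) (i j : Fin 4) (p : RTPt) : ℝ :=
  (∑ k : Fin 4, X p k * RTpd k (T i j) p)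
  + (∑ k : Fin 4, T k j p * RTpd i (fun q => X q k) p)
  + (∑ k : Fin 4, T i k p * RTpd j (fun q => X q k) p)

/-- Lie derivative of a `(0,4)` tensor field along a vector field `X`. -/
def RTlie4 (X : RTPt → Fin 4 → ℝ) (T : Fin 4 → Fin 4 → Fin 4 → Fin 4 → RTPt → ℝ)
    (i j k l : Fin 4) (p : RTPt) : ℝ :=
  (∑ m : Fin 4, X p m * RTpd m (T i j k l) p)
  + (∑ m : Fin 4, T m j k l p * RTpd i (fun q => X q m) p)
  + (∑ m : Fin 4, T i m k l p * RTpd j (fun q => X q m) p)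
  + (∑ m : Fin 4, T i j m l p * RTpd k (fun q => X q m) p)
  + (∑ m : Fin 4, T i j k m p * RTpd l (fun q => X q m) p)

/-- Kulkarni–Nomizu product of two `(0,2)` tensor fields. -/
def RTKN (A B : Fin 4 → Fin 4 → RTPt → ℝ) (i j k l : Fin 4) (p : RTPt) : ℝ :=
  A i l p * B j k p - A i k p * B j l p + A j k p * B i l p - A j l p * B i k p

/-- `F₁ = f_x² + f_y² - f(f_{xx} + f_{yy})`. -/
def F1 (f : ℝ → ℝ → ℝ) (x y : ℝ) : ℝ :=
  (pX f x y)^2 + (pY f x y)^2 - f x y * (pX (pX f) x y + pY (pY f) x y)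

/-- `F₁ᵐ = f_x² + f_y² - f(f_{xx} - f_{yy})`. -/
def F1m (f : ℝ → ℝ → ℝ) (x y : ℝ) : ℝ :=
  (pX f x y)^2 + (pY f x y)^2 - f x y * (pX (pX f) x y - pY (pY f) x y)

/-- `F₁₁` from the paper. -/
def F11 (a b : ℝ) (f : ℝ → ℝ → ℝ) (r x y : ℝ) : ℝ :=
  -2*(pX f x y)^3
  + pX f x y * (4*a - 16*b*r - 2*(pY f x y)^2 + f x y * (pY (pY f) x y + 3*pX (pX f) x y))
  - f x y * (-2*pY f x y * pY (pX f) x y + f x y * (pX (pX (pX f)) x y + pY (pY (pX f)) x y))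

/-- `F₁₃` from the paper. -/
def F13 (a b : ℝ) (f : ℝ → ℝ → ℝ) (r x y : ℝ) : ℝ :=
  -2*(pY f x y)^3
  + pY f x y * (4*a - 16*b*r - 2*(pX f x y)^2 + f x y * (3*pY (pY f) x y + pX (pX f) x y))
  - f x y * (-2*pX f x y * pY (pX f) x y + f x y * (pY (pY (pY f)) x y + pY (pX (pX f)) x y))

/-- `v` is the partial derivative of `F` in direction `i` at `p`. -/
def HasPD (i : Fin 4) (F : RTPt → ℝ) (v : ℝ) (p : RTPt) : Prop :=
  HasDerivAt (fun s => F (Function.update p i s)) v (p i)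

theorem HasPD.eq {i : Fin 4} {F : RTPt → ℝ} {v : ℝ} {p : RTPt} (h : HasPD i F v p) :
    RTpd i F p = v := HasDerivAt.deriv h

theorem RTpd_congr {l : Fin 4} {F G : RTPt → ℝ} {p : RTPt} (hp : p 1 ≠ 0)
    (h : ∀ q : RTPt, q 1 ≠ 0 → F q = G q) : RTpd l F p = RTpd l G p := by
  unfold RTpd
  apply Filter.EventuallyEq.deriv_eq
  have hc : Continuous (fun s : ℝ => Function.update p l s 1) := by fun_prop
  have : ∀ᶠ s in nhds (p l), Function.update p l s 1 ≠ 0 := by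
    apply hc.continuousAt.eventually_ne
    simpa using hp
  filter_upwards [this] with s hs
  exact h _ hs

theorem HasPD.const (i : Fin 4) (c : ℝ) (p : RTPt) : HasPD i (fun _ => c) 0 p :=
  hasDerivAt_const _ _

theorem HasPD.coord (i : Fin 4) (p : RTPt) : HasPD i (fun q => q i) 1 p := by
  unfold HasPD; simpa using hasDerivAt_id' (p i)

theorem HasPD.coord_ne {i j : Fin 4} (h : j ≠ i) (p : RTPt) : HasPD i (fun q => q j) 0 p := by
  unfold HasPD; simpa [Function.update_of_ne h] using hasDerivAt_const (p i) (p j)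

theorem HasPD.neg {i : Fin 4} {F : RTPt → ℝ} {v : ℝ} {p : RTPt} (h : HasPD i F v p) :
    HasPD i (fun q => - F q) (-v) p := HasDerivAt.fun_neg h

theorem HasPD.mul {i : Fin 4} {F G : RTPt → ℝ} {v w : ℝ} {p : RTPt} (h : HasPD i F v p)
    (h' : HasPD i G w p) : HasPD i (fun q => F q * G q) (v * G p + F p * w) p := by
  have := HasDerivAt.fun_mul h h'
  simpa [HasPD] using this

theorem HasPD.add {i : Fin 4} {F G : RTPt → ℝ} {v w : ℝ} {p : RTPt} (h : HasPD i F v p)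
    (h' : HasPD i G w p) : HasPD i (fun q => F q + G q) (v + w) p := HasDerivAt.fun_add h h'

theorem HasPD.sub {i : Fin 4} {F G : RTPt → ℝ} {v w : ℝ} {p : RTPt} (h : HasPD i F v p)
    (h' : HasPD i G w p) : HasPD i (fun q => F q - G q) (v - w) p := HasDerivAt.fun_sub h h'

theorem HasPD.div {i : Fin 4} {F G : RTPt → ℝ} {v w : ℝ} {p : RTPt} (h : HasPD i F v p)
    (h' : HasPD i G w p) (h0 : G p ≠ 0) :
    HasPD i (fun q => F q / G q) ((v * G p - F p * w) / (G p)^2) p := by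
  have := HasDerivAt.fun_div h h' (by simpa using h0)
  simpa [HasPD] using this

theorem HasPD.pow {i : Fin 4} {F : RTPt → ℝ} {v : ℝ} {p : RTPt} (h : HasPD i F v p) :
    HasPD i (fun q => (F q)^2) (2 * F p * v) p := by
  have := HasDerivAt.fun_pow h 2
  simpa [HasPD] using this

theorem HasPD.cv {i : Fin 4} {F : RTPt → ℝ} {v w : ℝ} {p : RTPt} (h : HasPD i F v p)
    (e : v = w) : HasPD i F w p := e ▸ h

/-- smooth functions of two variables -/
abbrev Sm (u : ℝ → ℝ → ℝ) : Prop := ContDiff ℝ (⊤ : ℕ∞) (Function.uncurry u)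

theorem Sm.hasX {u : ℝ → ℝ → ℝ} (h : Sm u) (x y : ℝ) :
    HasDerivAt (fun s => u s y) (pX u x y) x := by
  have h1 : Differentiable ℝ (Function.uncurry u) := h.differentiable (by simp)
  have h2 : Differentiable ℝ (fun s : ℝ => (s, y)) := by fun_prop
  exact ((h1.comp h2) x).hasDerivAt

theorem Sm.hasY {u : ℝ → ℝ → ℝ} (h : Sm u) (x y : ℝ) :
    HasDerivAt (fun s => u x s) (pY u x y) y := by
  have h1 : Differentiable ℝ (Function.uncurry u) := h.differentiable (by simp)
  have h2 : Differentiable ℝ (fun s : ℝ => (x, s)) := by fun_prop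
  exact ((h1.comp h2) y).hasDerivAt

theorem Sm.pX_eq {u : ℝ → ℝ → ℝ} (h : Sm u) (x y : ℝ) :
    pX u x y = fderiv ℝ (Function.uncurry u) (x, y) (1, 0) := by
  have h1 : Differentiable ℝ (Function.uncurry u) := h.differentiable (by simp)
  have h2 : HasDerivAt (fun s : ℝ => (s, y)) ((1 : ℝ), (0 : ℝ)) x :=
    (hasDerivAt_id x).prodMk (hasDerivAt_const x y)
  have h3 := HasFDerivAt.comp_hasDerivAt (f := fun s : ℝ => (s, y)) x (h1 (x, y)).hasFDerivAt h2
  exact h3.deriv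

theorem Sm.pY_eq {u : ℝ → ℝ → ℝ} (h : Sm u) (x y : ℝ) :
    pY u x y = fderiv ℝ (Function.uncurry u) (x, y) (0, 1) := by
  have h1 : Differentiable ℝ (Function.uncurry u) := h.differentiable (by simp)
  have h2 : HasDerivAt (fun s : ℝ => (x, s)) ((0 : ℝ), (1 : ℝ)) y :=
    (hasDerivAt_const y x).prodMk (hasDerivAt_id y)
  have h3 := HasFDerivAt.comp_hasDerivAt (f := fun s : ℝ => (x, s)) y (h1 (x, y)).hasFDerivAt h2
  exact h3.deriv

theorem Sm.uX {u : ℝ → ℝ → ℝ} (h : Sm u) :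
    Function.uncurry (pX u) = fun z => fderiv ℝ (Function.uncurry u) z (1, 0) := by
  funext ⟨x, y⟩; exact h.pX_eq x y

theorem Sm.uY {u : ℝ → ℝ → ℝ} (h : Sm u) :
    Function.uncurry (pY u) = fun z => fderiv ℝ (Function.uncurry u) z (0, 1) := by
  funext ⟨x, y⟩; exact h.pY_eq x y

theorem Sm.pX {u : ℝ → ℝ → ℝ} (h : Sm u) : Sm (pX u) := by
  unfold Sm; rw [h.uX]
  exact (h.fderiv_right (m := (⊤ : ℕ∞)) (by simp)).clm_apply contDiff_const

theorem Sm.pY {u : ℝ → ℝ → ℝ} (h : Sm u) : Sm (pY u) := by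
  unfold Sm; rw [h.uY]
  exact (h.fderiv_right (m := (⊤ : ℕ∞)) (by simp)).clm_apply contDiff_const

theorem Sm.comm {u : ℝ → ℝ → ℝ} (h : Sm u) : _root_.pX (_root_.pY u) = _root_.pY (_root_.pX u) := by
  funext x y
  have hd : Differentiable ℝ (fderiv ℝ (Function.uncurry u)) :=
    (h.fderiv_right (m := (⊤ : ℕ∞)) (by simp)).differentiable (by simp)
  rw [h.pY.pX_eq, h.pX.pY_eq, h.uX, h.uY]
  rw [fderiv_clm_apply (hd _) (by fun_prop), fderiv_clm_apply (hd _) (by fun_prop)]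
  have hs : IsSymmSndFDerivAt ℝ (Function.uncurry u) (x, y) :=
    (h.contDiffAt).isSymmSndFDerivAt (by
      rw [minSmoothness_of_isRCLikeNormedField]
      exact (WithTop.coe_le_coe (b := (2 : ℕ∞))).2 le_top)
  simpa using hs.eq (1, 0) (0, 1)

/-- a function of two variables seen on the chart -/
def lf (u : ℝ → ℝ → ℝ) (p : RTPt) : ℝ := u (p 2) (p 3)

theorem Sm.pd0 {u : ℝ → ℝ → ℝ} (p : RTPt) : HasPD 0 (lf u) 0 p := by
  unfold HasPD lf; simpa using hasDerivAt_const _ _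
theorem Sm.pd1 {u : ℝ → ℝ → ℝ} (p : RTPt) : HasPD 1 (lf u) 0 p := by
  unfold HasPD lf; simpa using hasDerivAt_const _ _
theorem Sm.pd2 {u : ℝ → ℝ → ℝ} (h : Sm u) (p : RTPt) : HasPD 2 (lf u) (lf (_root_.pX u) p) p := by
  unfold HasPD lf; simpa using h.hasX _ _
theorem Sm.pd3 {u : ℝ → ℝ → ℝ} (h : Sm u) (p : RTPt) : HasPD 3 (lf u) (lf (_root_.pY u) p) p := by
  unfold HasPD lf; simpa using h.hasY _ _

/-- partial derivative table for functions of `(x,y)` -/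
def dlf (l : Fin 4) (u : ℝ → ℝ → ℝ) (p : RTPt) : ℝ :=
  ![0, 0, lf (pX u) p, lf (pY u) p] l

theorem Sm.pd {u : ℝ → ℝ → ℝ} (h : Sm u) (l : Fin 4) (p : RTPt) :
    HasPD l (lf u) (dlf l u p) p := by
  fin_cases l
  · exact Sm.pd0 p
  · exact Sm.pd1 p
  · exact h.pd2 p
  · exact h.pd3 p

/-- partial derivative table for the coordinate `r` -/
def dr (l : Fin 4) : ℝ := ![0, 1, 0, 0] l

theorem pd_r (l : Fin 4) (p : RTPt) : HasPD l (fun q => q 1) (dr l) p := by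
  fin_cases l
  · exact HasPD.coord_ne (by decide) p
  · exact HasPD.coord 1 p
  · exact HasPD.coord_ne (by decide) p
  · exact HasPD.coord_ne (by decide) p

/-- the metric function -/
def hA (a b d : ℝ) (p : RTPt) : ℝ := a - 2 * b * p 1 - d / p 1
/-- its `r` derivative -/
def hA1 (b d : ℝ) (p : RTPt) : ℝ := -2 * b + d / (p 1)^2

theorem pd_A (a b d : ℝ) (l : Fin 4) (p : RTPt) (hp : p 1 ≠ 0) :
    HasPD l (hA a b d) (hA1 b d p * dr l) p := by
  refine (((HasPD.const l a p).sub ((HasPD.const l (2*b) p).mul (pd_r l p))).sub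
    ((HasPD.const l d p).div (pd_r l p) hp)).cv ?_
  simp only [hA1]; field_simp; ring

theorem pd_A1 (b d : ℝ) (l : Fin 4) (p : RTPt) (hp : p 1 ≠ 0) :
    HasPD l (hA1 b d) (-2 * d / (p 1)^3 * dr l) p := by
  refine ((HasPD.const l (-2*b) p).add
    ((HasPD.const l d p).div (pd_r l p).pow (pow_ne_zero 2 hp))).cv ?_
  field_simp; ring

/-- derivative table of the metric -/
def dg (b d : ℝ) (f : ℝ → ℝ → ℝ) (l i j : Fin 4) (p : RTPt) : ℝ :=
  if i = 0 ∧ j = 0 then -2 * (hA1 b d p * dr l)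
  else if (i = 2 ∧ j = 2) ∨ (i = 3 ∧ j = 3) then
    -2 * p 1 * dr l / (lf f p)^2 + 2 * (p 1)^2 * dlf l f p / (lf f p)^3
  else 0

theorem pd_g (a b d : ℝ) {f : ℝ → ℝ → ℝ} (hf : Sm f) (hf0 : ∀ x y, f x y ≠ 0)
    (l i j : Fin 4) (p : RTPt) (hp : p 1 ≠ 0) :
    RTpd l (RTg a b d f i j) p = dg b d f l i j p := by
  apply HasPD.eq
  have h0 : lf f p ≠ 0 := hf0 _ _
  unfold dg
  by_cases h1 : i = 0 ∧ j = 0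
  · have : RTg a b d f i j = fun q => -2 * hA a b d q := by
      funext q; simp only [RTg, if_pos h1, hA]
    rw [this, if_pos h1]
    refine ((HasPD.const l (-2) p).mul (pd_A a b d l p hp)).cv (by ring)
  rw [if_neg h1]
  by_cases h2 : (i = 2 ∧ j = 2) ∨ (i = 3 ∧ j = 3)
  · have h3 : ¬ ((i = 0 ∧ j = 1) ∨ (i = 1 ∧ j = 0)) := by omega
    have : RTg a b d f i j = fun q => -(q 1)^2 / (lf f q)^2 := by
      funext q; simp only [RTg, if_neg h1, if_pos h2, if_neg h3, lf]
    rw [this, if_pos h2]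
    refine ((pd_r l p).pow.neg.div (hf.pd l p).pow (pow_ne_zero 2 h0)).cv ?_
    field_simp; ring
  rw [if_neg h2]
  by_cases h3 : (i = 0 ∧ j = 1) ∨ (i = 1 ∧ j = 0)
  · have : RTg a b d f i j = fun q => 1 := by
      funext q; simp only [RTg, if_neg h1, if_pos h3]
    rw [this]; exact HasPD.const _ _ _
  · have : RTg a b d f i j = fun q => 0 := by
      funext q; simp only [RTg, if_neg h1, if_neg h2, if_neg h3]
    rw [this]; exact HasPD.const _ _ _

/-- closed form of the Christoffel symbols -/
def GG (a b d : ℝ) (f : ℝ → ℝ → ℝ) (k i j : Fin 4) (p : RTPt) : ℝ :=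
  ![!![hA1 b d p, 0, 0, 0; 0, 0, 0, 0; 0, 0, p 1 / (lf f p)^2, 0; 0, 0, 0, p 1 / (lf f p)^2],
    !![2 * hA a b d p * hA1 b d p, -hA1 b d p, 0, 0; -hA1 b d p, 0, 0, 0;
       0, 0, 2 * hA a b d p * (p 1 / (lf f p)^2), 0; 0, 0, 0, 2 * hA a b d p * (p 1 / (lf f p)^2)],
    !![0, 0, 0, 0; 0, 0, 1 / p 1, 0;
       0, 1 / p 1, -(lf (pX f) p / lf f p), -(lf (pY f) p / lf f p);
       0, 0, -(lf (pY f) p / lf f p), lf (pX f) p / lf f p],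
    !![0, 0, 0, 0; 0, 0, 0, 1 / p 1; 0, 0, lf (pY f) p / lf f p, -(lf (pX f) p / lf f p);
       0, 1 / p 1, -(lf (pX f) p / lf f p), -(lf (pY f) p / lf f p)]] k i j

theorem Gamma_eq (a b d : ℝ) {f : ℝ → ℝ → ℝ} (hf : Sm f) (hf0 : ∀ x y, f x y ≠ 0)
    (k i j : Fin 4) (p : RTPt) (hp : p 1 ≠ 0) :
    RTGamma a b d f k i j p = GG a b d f k i j p := by
  have h0 : lf f p ≠ 0 := hf0 _ _
  have e : f (p 2) (p 3) = lf f p := rfl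
  have e2 : a - 2 * b * p 1 - d / p 1 = hA a b d p := rfl
  unfold RTGamma
  simp only [pd_g a b d hf hf0 _ _ _ p hp, Fin.sum_univ_four, RTgInv, e, e2]
  fin_cases k <;> fin_cases i <;> fin_cases j <;>
    simp [GG, dg, dr, dlf] <;> (try field_simp) <;> (try ring)

/-- derivative of `r / f^2` -/
def dq (f : ℝ → ℝ → ℝ) (l : Fin 4) (p : RTPt) : ℝ :=
  dr l / (lf f p)^2 - 2 * p 1 * dlf l f p / (lf f p)^3

/-- derivative of `u / f` -/
def dquo (f u : ℝ → ℝ → ℝ) (l : Fin 4) (p : RTPt) : ℝ :=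
  (dlf l u p * lf f p - lf u p * dlf l f p) / (lf f p)^2

/-- derivative of `A'` -/
def dA1 (d : ℝ) (l : Fin 4) (p : RTPt) : ℝ := -2 * d / (p 1)^3 * dr l

/-- derivative of `2 A A'` -/
def dAA (a b d : ℝ) (l : Fin 4) (p : RTPt) : ℝ :=
  2 * (hA1 b d p * dr l) * hA1 b d p + 2 * hA a b d p * dA1 d l p

/-- derivative of `2 A r / f^2` -/
def dAq (a b d : ℝ) (f : ℝ → ℝ → ℝ) (l : Fin 4) (p : RTPt) : ℝ :=
  2 * (hA1 b d p * dr l) * (p 1 / (lf f p)^2) + 2 * hA a b d p * dq f l p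

/-- derivatives of the Christoffel symbols -/
def dGG (a b d : ℝ) (f : ℝ → ℝ → ℝ) (l k i j : Fin 4) (p : RTPt) : ℝ :=
  ![!![dA1 d l p, 0, 0, 0; 0, 0, 0, 0; 0, 0, dq f l p, 0; 0, 0, 0, dq f l p],
    !![dAA a b d l p, -dA1 d l p, 0, 0; -dA1 d l p, 0, 0, 0;
       0, 0, dAq a b d f l p, 0; 0, 0, 0, dAq a b d f l p],
    !![0, 0, 0, 0; 0, 0, -dr l / (p 1)^2, 0;
       0, -dr l / (p 1)^2, -dquo f (pX f) l p, -dquo f (pY f) l p;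
       0, 0, -dquo f (pY f) l p, dquo f (pX f) l p],
    !![0, 0, 0, 0; 0, 0, 0, -dr l / (p 1)^2; 0, 0, dquo f (pY f) l p, -dquo f (pX f) l p;
       0, -dr l / (p 1)^2, -dquo f (pX f) l p, -dquo f (pY f) l p]] k i j

theorem pd_GG (a b d : ℝ) {f : ℝ → ℝ → ℝ} (hf : Sm f) (hf0 : ∀ x y, f x y ≠ 0)
    (l k i j : Fin 4) (p : RTPt) (hp : p 1 ≠ 0) :
    HasPD l (GG a b d f k i j) (dGG a b d f l k i j p) p := by
  have h0 : lf f p ≠ 0 := hf0 _ _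
  have c0 := HasPD.const l 0 p
  have hr : HasPD l (fun q => 1 / q 1) (-dr l / (p 1)^2) p :=
    ((HasPD.const l 1 p).div (pd_r l p) hp).cv (by ring)
  have hq : HasPD l (fun q => q 1 / (lf f q)^2) (dq f l p) p := by
    refine ((pd_r l p).div (hf.pd l p).pow (pow_ne_zero 2 h0)).cv ?_
    simp only [dq]; field_simp
  have hX : HasPD l (fun q => lf (pX f) q / lf f q) (dquo f (pX f) l p) p :=
    (hf.pX.pd l p).div (hf.pd l p) h0
  have hY : HasPD l (fun q => lf (pY f) q / lf f q) (dquo f (pY f) l p) p :=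
    (hf.pY.pd l p).div (hf.pd l p) h0
  have h1 : HasPD l (fun q => hA1 b d q) (dA1 d l p) p := pd_A1 b d l p hp
  have h2 : HasPD l (fun q => 2 * hA a b d q) (2 * (hA1 b d p * dr l)) p :=
    ((HasPD.const l 2 p).mul (pd_A a b d l p hp)).cv (by ring)
  have h3 : HasPD l (fun q => 2 * hA a b d q * hA1 b d q) (dAA a b d l p) p := h2.mul h1
  have h4 : HasPD l (fun q => 2 * hA a b d q * (q 1 / (lf f q)^2)) (dAq a b d f l p) p :=
    h2.mul hq
  have h1n := h1.neg
  have hXn := hX.neg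
  have hYn := hY.neg
  fin_cases k <;> fin_cases i <;> fin_cases j <;> first
    | exact c0 | exact hr | exact hq | exact hX | exact hY | exact h1 | exact h3 | exact h4
    | exact h1n | exact hXn | exact hYn

theorem ginv_g (a b d : ℝ) {f : ℝ → ℝ → ℝ} (hf0 : ∀ x y, f x y ≠ 0)
    (k m : Fin 4) (p : RTPt) (hp : p 1 ≠ 0) :
    ∑ l : Fin 4, RTgInv a b d f k l p * RTg a b d f l m p = if k = m then 1 else 0 := by
  have h0 := hf0 (p 2) (p 3)
  fin_cases k <;> fin_cases m <;> simp [Fin.sum_univ_four, RTgInv, RTg] <;>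
    (try field_simp) <;> (try ring)

/-- closed form of the Ricci tensor in terms of Christoffel symbols -/
theorem Ric_eq (a b d : ℝ) {f : ℝ → ℝ → ℝ} (hf : Sm f) (hf0 : ∀ x y, f x y ≠ 0)
    (i j : Fin 4) (p : RTPt) (hp : p 1 ≠ 0) :
    RTRic a b d f i j p = ∑ k : Fin 4, (dGG a b d f j k i k p - dGG a b d f k k i j p
      + ∑ β : Fin 4, (GG a b d f β i k p * GG a b d f k β j p
          - GG a b d f β i j p * GG a b d f k β k p)) := by
  have hd : ∀ l k i j, RTpd l (RTGamma a b d f k i j) p = dGG a b d f l k i j p := by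
    intro l k i j
    rw [RTpd_congr hp (fun q hq => Gamma_eq a b d hf hf0 k i j q hq)]
    exact (pd_GG a b d hf hf0 l k i j p hp).eq
  unfold RTRic RTRiem
  simp only [hd, Gamma_eq a b d hf hf0 _ _ _ p hp]
  refine Finset.sum_congr rfl fun k _ => ?_
  simp only [Finset.mul_sum (Finset.univ : Finset (Fin 4)) (fun α => RTg a b d f _ α p * _)]
  rw [Finset.sum_comm]
  simp only [← mul_assoc, ← Finset.sum_mul, ginv_g a b d hf0 _ _ p hp, ite_mul, one_mul, zero_mul,
    Finset.sum_ite_eq, Finset.mem_univ, if_true]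

/-- closed form of the `tr` component -/
def Sc (b d : ℝ) (p : RTPt) : ℝ := -2 * d / (p 1)^3 + 2 * hA1 b d p / p 1

/-- closed form of the `xx` and `yy` components -/
def Sx (a b : ℝ) (f : ℝ → ℝ → ℝ) (p : RTPt) : ℝ :=
  ((lf (pX f) p)^2 + (lf (pY f) p)^2 - lf f p * (lf (pX (pX f)) p + lf (pY (pY f)) p)
    - 2 * a + 8 * b * p 1) / (lf f p)^2

/-- closed form of the Ricci tensor -/
def SR (a b d : ℝ) (f : ℝ → ℝ → ℝ) (i j : Fin 4) (p : RTPt) : ℝ :=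
  !![-2 * hA a b d p * Sc b d p, Sc b d p, 0, 0; Sc b d p, 0, 0, 0;
     0, 0, Sx a b f p, 0; 0, 0, 0, Sx a b f p] i j

theorem Ric_SR (a b d : ℝ) {f : ℝ → ℝ → ℝ} (hf : Sm f) (hf0 : ∀ x y, f x y ≠ 0)
    (i j : Fin 4) (p : RTPt) (hp : p 1 ≠ 0) :
    RTRic a b d f i j p = SR a b d f i j p := by
  have h0 : lf f p ≠ 0 := hf0 _ _
  rw [Ric_eq a b d hf hf0 i j p hp]
  fin_cases i <;> fin_cases j <;>
    simp [Fin.sum_univ_four, GG, dGG, SR, Sc, Sx, dAq, dAA, dA1, dquo, dq, dr, dlf, hf.comm] <;>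
    (try simp only [hA, hA1]) <;> (try field_simp) <;> (try ring)

theorem pd_Sx (a b : ℝ) {f : ℝ → ℝ → ℝ} (hf : Sm f) (hf0 : ∀ x y, f x y ≠ 0) (p : RTPt) :
    HasPD 2 (Sx a b f) (F11 a b f (p 1) (p 2) (p 3) / (lf f p)^3) p ∧
    HasPD 3 (Sx a b f) (F13 a b f (p 1) (p 2) (p 3) / (lf f p)^3) p := by
  have h0 : lf f p ≠ 0 := hf0 _ _
  have key : ∀ l, HasPD l (Sx a b f) _ p := fun l =>
    (((((hf.pX.pd l p).pow.add (hf.pY.pd l p).pow).sub ((hf.pd l p).mul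
      ((hf.pX.pX.pd l p).add (hf.pY.pY.pd l p)))).sub (HasPD.const l (2 * a) p)).add
      ((HasPD.const l (8 * b) p).mul (pd_r l p))).div (hf.pd l p).pow (pow_ne_zero 2 h0)
  have e : ∀ u : ℝ → ℝ → ℝ, u (p 2) (p 3) = lf u p := fun _ => rfl
  have c2 : pX (pY (pY f)) = pY (pY (pX f)) := by rw [hf.pY.comm, hf.comm]
  constructor
  · refine (key 2).cv ?_
    simp only [F11, e, dlf, dr]
    simp [c2, hf.comm]
    field_simp; ring
  · refine (key 3).cv ?_
    simp only [F13, e, dlf, dr]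
    simp [c2, hf.comm]
    field_simp; ring

theorem pd_Sc (b d : ℝ) (l : Fin 4) (hl : dr l = 0) (p : RTPt) (hp : p 1 ≠ 0) :
    HasPD l (Sc b d) 0 p := by
  have h := ((pd_r l p).pow.mul (pd_r l p)).mul (HasPD.const l 1 p)
  have h' := ((HasPD.const l (-2 * d) p).div h (by simpa using hp)).add
    (((HasPD.const l 2 p).mul (pd_A1 b d l p hp)).div (pd_r l p) hp)
  have e : Sc b d = fun q => -2 * d / ((q 1)^2 * q 1 * 1) + 2 * hA1 b d q / q 1 := by
    funext q; simp only [Sc]; ring_nf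
  rw [e]
  refine h'.cv ?_
  simp [hl]

/-- Ricci collineation along `ξ = μ₁ ∂/∂x + μ₂ ∂/∂y`
when `μ₂F₁₃ + μ₁F₁₁ = 0` identically. -/
theorem RT_Ricci_collineation (a b d : ℝ) (f : ℝ → ℝ → ℝ)
    (hf : ContDiff ℝ (⊤ : ℕ∞) (Function.uncurry f)) (hf0 : ∀ x y, f x y ≠ 0)
    (μ₁ μ₂ : ℝ)
    (hcol : ∀ p : RTPt, p 1 ≠ 0 →
      μ₂ * F13 a b f (p 1) (p 2) (p 3) + μ₁ * F11 a b f (p 1) (p 2) (p 3) = 0)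
    (hne : ∀ p : RTPt, p 1 ≠ 0 → F1 f (p 2) (p 3) - 2*a + 4*b*p 1 ≠ 0) :
    ∀ p : RTPt, p 1 ≠ 0 → ∀ i j : Fin 4,
      RTlie2 (fun _ k => if k = 2 then μ₁ else if k = 3 then μ₂ else 0)
        (RTRic a b d f) i j p = 0 := by
  intro p hp i j
  have h0 : lf f p ≠ 0 := hf0 _ _
  have hz : ∀ (l : Fin 4) (c : ℝ), RTpd l (fun _ => c) p = 0 := fun l c => (HasPD.const l c p).eq
  have hR : ∀ l, RTpd l (RTRic a b d f i j) p = RTpd l (SR a b d f i j) p := fun l =>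
    RTpd_congr hp (fun q hq => Ric_SR a b d hf hf0 i j q hq)
  simp only [RTlie2, hz, hR, mul_zero, Finset.sum_const_zero, add_zero]
  have main : μ₁ * RTpd 2 (SR a b d f i j) p + μ₂ * RTpd 3 (SR a b d f i j) p = 0 := by
    have zero : ∀ F : RTPt → ℝ, HasPD 2 F 0 p → HasPD 3 F 0 p →
        μ₁ * RTpd 2 F p + μ₂ * RTpd 3 F p = 0 := by
      intro F h2 h3
      rw [h2.eq, h3.eq]; ring
    have z0 := zero (fun _ => 0) (HasPD.const _ _ _) (HasPD.const _ _ _)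
    have k2 := pd_Sc b d 2 rfl p hp
    have k3 := pd_Sc b d 3 rfl p hp
    have z1 := zero (fun q => Sc b d q) k2 k3
    have z2 := zero (fun q => -2 * hA a b d q * Sc b d q)
      ((((HasPD.const 2 (-2) p).mul (pd_A a b d 2 p hp)).mul k2).cv (by simp [dr]))
      ((((HasPD.const 3 (-2) p).mul (pd_A a b d 3 p hp)).mul k3).cv (by simp [dr]))
    have z3 : μ₁ * RTpd 2 (fun q => Sx a b f q) p + μ₂ * RTpd 3 (fun q => Sx a b f q) p = 0 := by
      have h := pd_Sx a b hf hf0 p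
      have e2 : RTpd 2 (fun q => Sx a b f q) p = _ := h.1.eq
      have e3 : RTpd 3 (fun q => Sx a b f q) p = _ := h.2.eq
      rw [e2, e3, ← mul_div_assoc, ← mul_div_assoc, ← add_div, add_comm, hcol p hp, zero_div]
    fin_cases i <;> fin_cases j <;> first
      | exact z0 | exact z1 | exact z2 | exact z3
  simpa [Fin.sum_univ_four] using main
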